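/- arXiv:2008.03812 — 2 statements merged into one kernel-verified Lean document; each statement's English description precedes it below -/
import Mathlib

section
/- There exists a natural number M such that for every m ≥ M and every finite field F of even order q, writing G = Sp_{2m}(F), the number of elements y ∈ G such that no x ∈ G makes {x, y} invariably generate G is at least |G|/(4·q³); equivalently, the number of y ∈ G for which some x ∈ G makes {x, y} invariably generate G is at most (1 − 1/(4·q³)) · |G|. -/
/-- `{x, y}` invariably generates `G`: for all `g, h`, the conjugates
`g * x * g⁻¹` and `h * y * h⁻¹` generate `G`. -/
def InvGen {G : Type*} [Group G] (x y : G) : Prop :=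
  ∀ g h : G, Subgroup.closure {g * x * g⁻¹, h * y * h⁻¹} = ⊤

set_option linter.unusedSectionVars false

namespace SpAux

open Classical in
noncomputable def psi {F : Type*} [Field F] (x : F) : ℤ := if ∃ s : F, s ^ 2 + s = x then 1 else -1

section psi
variable {F : Type*} [Field F] [CharP F 2]

def wp (F : Type*) [Field F] [CharP F 2] : F →+ F where
  toFun s := s ^ 2 + s
  map_zero' := by simp
  map_add' a b := by
    rw [add_pow_char]; ring

open Classical in
theorem psi_eq (x : F) : psi x = if x ∈ (wp F).range then 1 else -1 := by
  rfl

theorem wp_index [Finite F] : (wp F).range.index = 2 := by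
  have h1 := (wp F).range.card_mul_index
  have h2 := (wp F).ker.card_mul_index
  rw [AddSubgroup.index_ker] at h2
  have h3 : Nat.card (wp F).ker = 2 := by
    have : ((wp F).ker : Set F) = {0, 1} := by
      ext x
      simp only [SetLike.mem_coe, AddMonoidHom.mem_ker, Set.mem_insert_iff, Set.mem_singleton_iff]
      change x ^ 2 + x = 0 ↔ _
      constructor
      · intro h
        have : x * (x + 1) = 0 := by rw [← h]; ring
        rcases mul_eq_zero.1 this with h | h
        · exact Or.inl h
        · right; exact CharTwo.add_eq_zero.1 h
      · rintro (rfl | rfl)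
        · simp
        · simp [CharTwo.add_self_eq_zero]
    rw [← SetLike.coe_sort_coe, this, Nat.card_coe_set_eq, Set.ncard_pair zero_ne_one]
  rw [h3] at h2
  have h4 : 0 < Nat.card (wp F).range := Nat.card_pos
  nlinarith

theorem psi_add [Finite F] (x y : F) : psi (x + y) = psi x * psi y := by
  have h := AddSubgroup.add_mem_iff_of_index_two (wp_index (F := F)) (a := x) (b := y)
  simp only [psi_eq]
  by_cases h1 : x ∈ (wp F).range <;> by_cases h2 : y ∈ (wp F).range <;> simp only [h, h1, h2] <;>
    simp

theorem psi_sq [Finite F] (x : F) : psi (x ^ 2) = psi x := by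
  have h : psi (x ^ 2 + x) = 1 := by
    unfold psi; rw [if_pos ⟨x, rfl⟩]
  rw [psi_add] at h
  rcases Int.mul_eq_one_iff_eq_one_or_neg_one.1 h with ⟨h1, h2⟩ | ⟨h1, h2⟩ <;> rw [h1, h2]

theorem psi_cases (x : F) : psi x = 1 ∨ psi x = -1 := by
  unfold psi; split_ifs <;> simp

theorem psi_mul_self (x : F) : psi x * psi x = 1 := by
  rcases psi_cases x with h | h <;> rw [h] <;> rfl

theorem psi_zero : psi (0 : F) = 1 := by
  unfold psi; rw [if_pos ⟨0, by simp⟩]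

theorem psi_ne_one [Finite F] (x : F) : psi x = -1 ↔ x ∉ (wp F).range := by
  rw [psi_eq]; split_ifs with h <;> simp [h]

theorem exists_psi [Finite F] : ∃ x : F, psi x = -1 := by
  by_contra! h
  have : (wp F).range = ⊤ := by
    rw [eq_top_iff]; intro x _
    by_contra hx
    exact h x ((psi_ne_one x).2 hx)
  have h2 := wp_index (F := F)
  rw [this] at h2
  simp at h2

/-- the number of elements with `psi = -1` is half -/
theorem card_psi [Finite F] : 2 * Nat.card {x : F // psi x = -1} = Nat.card F := by
  obtain ⟨a, ha⟩ := exists_psi (F := F)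
  have e : {x : F // psi x = -1} ≃ {x : F // ¬ psi x = -1} :=
    { toFun := fun x => ⟨x.1 + a, by rw [psi_add, x.2, ha]; decide⟩
      invFun := fun x => ⟨x.1 + a, by
        rw [psi_add, ha, (psi_cases x.1).resolve_right x.2]; decide⟩
      left_inv := fun x => by ext; simp [add_assoc, CharTwo.add_self_eq_zero]
      right_inv := fun x => by ext; simp [add_assoc, CharTwo.add_self_eq_zero] }
  classical
  have := Fintype.ofFinite F
  have h := Nat.card_congr (Equiv.sumCompl (fun x : F => psi x = -1))
  rw [Nat.card_sum, ← Nat.card_congr e] at h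
  omega

end psi

/-- abstract symplectic data -/
structure Sp (F V G : Type*) [Field F] [AddCommGroup V] [Module F V] [Group G]
    [DistribMulAction G V] where
  B : V →ₗ[F] V →ₗ[F] F
  alt : ∀ u, B u u = 0
  symm : ∀ u w, B u w = B w u
  inv : ∀ (g : G) u w, B (g • u) (g • w) = B u w
  lin : ∀ (g : G) (c : F) (u : V), g • (c • u) = c • (g • u)
  rep : ∀ f : V →ₗ[F] F, ∃ c, ∀ u, f u = B u c
  trans : ∀ (a : V) (s : F), ∃ g : G, ∀ u, g • u = u + (s * B u a) • a
  ex : ∃ a b : V, a ≠ 0 ∧ b ≠ 0 ∧ a + b ≠ 0 ∧ B a b = 0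
  qf : ∃ Q : V → F, (∀ u w, Q (u + w) = Q u + Q w + B u w) ∧ ∀ (c : F) u, Q (c • u) = c ^ 2 * Q u

section main
variable {F V G : Type*} [Field F] [AddCommGroup V] [Module F V] [Group G]
    [DistribMulAction G V] (D : Sp F V G)

theorem Sp.nondeg {u : V} (h : ∀ w, D.B w u = 0) : u = 0 := by
  by_contra hu
  obtain ⟨f, hf, -⟩ := Submodule.exists_le_ker_of_notMem (K := F) (p := ⊥) (v := u) (by simpa using hu)
  obtain ⟨c, hc⟩ := D.rep f
  rw [hc, D.symm, h] at hf
  exact hf rfl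

/-- quadratic forms polarising to `B` -/
abbrev Om : Type _ := {Q : V → F // (∀ u w, Q (u + w) = Q u + Q w + D.B u w) ∧
  ∀ (c : F) u, Q (c • u) = c ^ 2 * Q u}

variable {D}

theorem inv' (g : G) (u w : V) : D.B (g⁻¹ • u) w = D.B u (g • w) := by
  rw [← D.inv g, smul_inv_smul]

noncomputable instance : MulAction G (Om D) where
  smul g Q := ⟨fun u => Q.1 (g⁻¹ • u), fun u w => by
      beta_reduce
      rw [smul_add, Q.2.1, D.inv], fun c u => by beta_reduce; rw [D.lin, Q.2.2]⟩
  one_smul Q := Subtype.ext (funext fun u => by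
    change Q.1 ((1 : G)⁻¹ • u) = _
    simp)
  mul_smul g h Q := Subtype.ext (funext fun u => by
    change Q.1 ((g * h)⁻¹ • u) = Q.1 (h⁻¹ • g⁻¹ • u)
    simp [mul_smul])

theorem smul_val (g : G) (Q : Om D) (u : V) : (g • Q).1 u = Q.1 (g⁻¹ • u) := rfl

theorem smul_fix {g : G} {Q : Om D} : g • Q = Q ↔ ∀ u, Q.1 (g • u) = Q.1 u := by
  constructor
  · intro h u
    conv_lhs => rw [← h]
    rw [smul_val, inv_smul_smul]
  · intro h
    apply Subtype.ext; funext u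
    rw [smul_val, ← h, smul_inv_smul]

instance [Finite F] [Finite V] : Finite (Om D) := by unfold Om; infer_instance

variable [CharP F 2]

def shift (Q : Om D) (z : V) : Om D := ⟨fun u => Q.1 u + (D.B u z) ^ 2, fun u w => by
    beta_reduce
    rw [Q.2.1, map_add, LinearMap.add_apply, add_pow_char]; ring, fun c u => by
    beta_reduce
    rw [Q.2.2, map_smul, LinearMap.smul_apply, smul_eq_mul]; ring⟩

theorem shift_val (Q : Om D) (z u : V) : (shift Q z).1 u = Q.1 u + (D.B u z) ^ 2 := rfl

theorem shift_inj {Q : Om D} {z z' : V} (h : shift Q z = shift Q z') : z = z' := by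
  rw [← sub_eq_zero]
  apply D.nondeg
  intro w
  have h1 : (shift Q z).1 w = (shift Q z').1 w := by rw [h]
  rw [shift_val, shift_val, add_right_inj] at h1
  rw [map_sub, sub_eq_zero]
  exact CharTwo.sq_injective h1

theorem exists_shift [Finite F] (Q Q' : Om D) : ∃ z, Q' = shift Q z := by
  let φ := (frobeniusEquiv F 2).symm
  have hφ : ∀ x, (φ x) ^ 2 = x := fun x => frobeniusEquiv_symm_pow_p F 2 x
  let f : V →ₗ[F] F :=
    { toFun := fun u => φ (Q'.1 u - Q.1 u)
      map_add' := fun u w => by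
        rw [← map_add]; congr 1; rw [Q.2.1, Q'.2.1]; ring
      map_smul' := fun c u => by
        apply CharTwo.sq_injective
        change (φ _) ^ 2 = (c * φ _) ^ 2
        rw [mul_pow, hφ, hφ, Q.2.2, Q'.2.2]; ring }
  obtain ⟨c, hc⟩ := D.rep f
  refine ⟨c, Subtype.ext (funext fun u => ?_)⟩
  rw [shift_val, ← hc]
  change _ = _ + (φ _) ^ 2
  rw [hφ]; ring

theorem smul_shift (g : G) (Q : Om D) (z : V) : g • shift Q z = shift (g • Q) (g • z) := by
  apply Subtype.ext; funext u
  rw [smul_val, shift_val, shift_val, smul_val, inv']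

theorem psi_shift [Finite F] (Q : Om D) (w z : V) :
    psi ((shift Q w).1 z) = psi (Q.1 w) * psi (Q.1 (z + w)) := by
  rw [shift_val, psi_add, psi_sq, Q.2.1, psi_add, psi_add]
  linear_combination (-psi (Q.1 z) * psi (D.B z w)) * psi_mul_self (Q.1 w)

/-- same-class forms are conjugate -/
theorem conj_of_psi (Q : Om D) (z : V) (h : psi (Q.1 z) = 1) : ∃ g : G, g • Q = shift Q z := by
  have h1 : ∃ s : F, s + s ^ 2 * Q.1 z = 1 := by
    by_cases h0 : Q.1 z = 0
    · exact ⟨1, by simp [h0]⟩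
    · unfold psi at h
      split_ifs at h with hs
      obtain ⟨s, hs⟩ := hs
      refine ⟨s / Q.1 z, ?_⟩
      field_simp
      rw [← hs]; ring
  obtain ⟨s, hs⟩ := h1
  obtain ⟨g, hg⟩ := D.trans z s
  refine ⟨g⁻¹, Subtype.ext (funext fun u => ?_)⟩
  rw [smul_val, inv_inv, hg, Q.2.1, Q.2.2, map_smul, smul_eq_mul, shift_val]
  linear_combination (D.B u z) ^ 2 * hs

theorem exists_fix [Finite F] (g : G) : ∃ Q : Om D, g • Q = Q := by
  obtain ⟨Q0, hQ0⟩ := D.qf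
  let Q : Om D := ⟨Q0, hQ0⟩
  obtain ⟨c, hc⟩ := exists_shift Q (g • Q)
  -- want z with z = c + g z
  let L : V →ₗ[F] V :=
    { toFun := fun u => g • u - u
      map_add' := fun u w => by rw [smul_add]; abel
      map_smul' := fun a u => by rw [D.lin, RingHom.id_apply, smul_sub] }
  have hmem : c ∈ LinearMap.range L := by
    by_contra hcon
    obtain ⟨f, hf, hle⟩ := Submodule.exists_le_ker_of_notMem hcon
    obtain ⟨u, hu⟩ := D.rep f
    have h1 : g⁻¹ • u = u := by
      rw [← sub_eq_zero]
      apply D.nondeg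
      intro w
      have : f (L w) = 0 := hle ⟨w, rfl⟩
      rw [hu] at this
      change D.B (g • w - w) u = 0 at this
      rw [map_sub, LinearMap.sub_apply] at this
      rw [map_sub, ← D.inv g, smul_inv_smul]
      exact this
    have h2 : (g • Q).1 u = (shift Q c).1 u := by rw [hc]
    rw [smul_val, h1, shift_val] at h2
    apply hf
    rw [hu, D.symm]
    have : (D.B u c) ^ 2 = 0 := by linear_combination -h2
    exact pow_eq_zero_iff (two_ne_zero) |>.1 this
  obtain ⟨z, hz⟩ := hmem
  change g • z - z = c at hz
  refine ⟨shift Q z, ?_⟩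
  rw [smul_shift, hc]
  apply Subtype.ext; funext u
  rw [shift_val, shift_val, shift_val, ← hz, map_sub, sub_eq_add_neg, CharTwo.neg_eq, add_pow_char]
  have := CharTwo.add_self_eq_zero ((D.B u (g • z)) ^ 2)
  linear_combination this

theorem stab_ne_top (Q : Om D) : MulAction.stabilizer G Q ≠ ⊤ := by
  intro h
  have key : ∀ a : V, a ≠ 0 → Q.1 a = 1 := by
    intro a ha
    obtain ⟨g, hg⟩ := D.trans a 1
    have h1 : g • Q = Q := by
      have : g ∈ MulAction.stabilizer G Q := by rw [h]; trivial
      exact this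
    by_contra hne
    apply ha
    apply D.nondeg
    intro w
    have h2 := smul_fix.1 h1 w
    rw [hg, Q.2.1, Q.2.2, map_smul, smul_eq_mul] at h2
    have h3 : (D.B w a) ^ 2 * (Q.1 a + 1) = 0 := by linear_combination h2
    rcases mul_eq_zero.1 h3 with h3 | h3
    · exact pow_eq_zero_iff (two_ne_zero) |>.1 h3
    · exact absurd (CharTwo.add_eq_zero.1 h3) hne
  obtain ⟨a, b, ha, hb, hab, h0⟩ := D.ex
  have h1 := Q.2.1 a b
  rw [key a ha, key b hb, key _ hab, h0, CharTwo.add_self_eq_zero] at h1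
  simp at h1

theorem not_invGen [Finite F] {y : G} {Q : Om D} {z : V} (h1 : y • Q = Q) (h2 : y • z = z)
    (h3 : psi (Q.1 z) = -1) (x : G) : ¬ InvGen x y := by
  have key : ∀ R : Om D, y • R = R → (∃ R' : Om D, x • R' = R' ∧ ∃ g : G, g • R' = R) →
      ¬ InvGen x y := by
    rintro R hy ⟨R', hx, g, hg⟩ hI
    have hc := hI g 1
    apply stab_ne_top R
    rw [eq_top_iff, ← hc, Subgroup.closure_le]
    rintro t (rfl | rfl)
    · change (g * x * g⁻¹) • R = R
      rw [← hg, mul_smul, mul_smul, inv_smul_smul, hx]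
    · change (1 * y * 1⁻¹) • R = R
      simpa using hy
  obtain ⟨R, hR⟩ := exists_fix (D := D) x
  obtain ⟨w, hw⟩ := exists_shift R Q
  rcases psi_cases (R.1 w) with h | h
  · obtain ⟨g, hg⟩ := conj_of_psi R w h
    exact key Q h1 ⟨R, hR, g, by rw [hg, hw]⟩
  · have h4 : y • shift Q z = shift Q z := by rw [smul_shift, h1, h2]
    have h5 : shift Q z = shift R (z + w) := by
      apply Subtype.ext; funext u
      rw [shift_val, shift_val, hw, shift_val, map_add, add_pow_char]; ring
    have h6 : psi (R.1 (z + w)) = 1 := by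
      rw [hw, psi_shift, h] at h3
      linarith
    obtain ⟨g, hg⟩ := conj_of_psi R (z + w) h6
    exact key _ h4 ⟨R, hR, g, by rw [hg, h5]⟩

section arf
variable [Finite F] [Fintype V]

noncomputable def arf (Q : Om D) : ℤ := ∑ u, psi (Q.1 u)

theorem arf_shift (Q : Om D) (z : V) : arf (shift Q z) = psi (Q.1 z) * arf Q := by
  unfold arf
  rw [Finset.mul_sum]
  refine Fintype.sum_equiv (Equiv.addRight z) _ _ fun u => ?_
  rw [psi_shift]; rfl

theorem arf_smul (g : G) (Q : Om D) : arf (g • Q) = arf Q := by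
  unfold arf
  exact Fintype.sum_equiv (MulAction.toPerm g⁻¹) _ _ fun u => rfl

theorem sum_psi_lin {z : V} (hz : z ≠ 0) : ∑ w, psi (D.B z w) = 0 := by
  have h1 : ∃ w, D.B z w ≠ 0 := by
    by_contra! h
    exact hz (D.nondeg fun w => by rw [D.symm, h])
  obtain ⟨w, hw⟩ := h1
  obtain ⟨t, ht⟩ := exists_psi (F := F)
  have h2 : D.B z ((t / D.B z w) • w) = t := by
    rw [map_smul, smul_eq_mul]; field_simp
  have h3 : ∑ w, psi (D.B z w) = ∑ w, - psi (D.B z w) := by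
    refine Fintype.sum_equiv (Equiv.addRight ((t / D.B z w) • w)) _ _ fun u => ?_
    rw [Equiv.coe_addRight]
    rw [map_add, h2, psi_add, ht]; ring
  rw [Finset.sum_neg_distrib] at h3
  omega

theorem arf_sq (Q : Om D) : arf Q * arf Q = Fintype.card V := by
  have h1 : arf Q * arf Q = ∑ w, ∑ z, psi ((shift Q w).1 z) := by
    conv_lhs => unfold arf
    rw [Finset.sum_mul]
    refine Finset.sum_congr rfl fun w _ => ?_
    exact (arf_shift Q w).symm
  rw [h1, Finset.sum_comm]
  have h2 : ∀ z, ∑ w, psi ((shift Q w).1 z) = psi (Q.1 z) * ∑ w, psi (D.B z w) := by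
    intro z
    rw [Finset.mul_sum]
    refine Finset.sum_congr rfl fun w _ => ?_
    rw [shift_val, psi_add, psi_sq]
  simp_rw [h2]
  rw [Finset.sum_eq_single 0]
  · have : Q.1 0 = 0 := by simpa using Q.2.2 0 0
    simp [this, psi_zero]
  · intro z _ hz
    rw [sum_psi_lin hz, mul_zero]
  · simp

theorem arf_ne (Q : Om D) : arf Q ≠ 0 := by
  intro h
  have := arf_sq Q
  rw [h] at this
  have h2 : 0 < Fintype.card V := Fintype.card_pos
  omega

end arf

theorem exists_val [Finite F] (Q : Om D) (t : F) : ∃ z, Q.1 z = t := by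
  have h1 : ∃ z, Q.1 z ≠ 0 := by
    by_contra! h
    obtain ⟨a, b, ha, -⟩ := D.ex
    apply ha
    apply D.nondeg
    intro w
    have := Q.2.1 w a
    rw [h, h, h] at this
    simpa using this.symm
  obtain ⟨z, hz⟩ := h1
  let φ := (frobeniusEquiv F 2).symm
  have hφ : ∀ x, (φ x) ^ 2 = x := fun x => frobeniusEquiv_symm_pow_p F 2 x
  refine ⟨φ (t / Q.1 z) • z, ?_⟩
  rw [Q.2.2, hφ]; field_simp

variable (D) in
abbrev Op : Type _ := {p : Om D × V // psi (p.1.1 p.2) = -1}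

noncomputable instance : MulAction G (Op D) where
  smul g p := ⟨(g • p.1.1, g • p.1.2), by
    change psi ((g • p.1.1).1 (g • p.1.2)) = -1
    rw [smul_val, inv_smul_smul, p.2]⟩
  one_smul p := Subtype.ext (Prod.ext (one_smul _ _) (one_smul _ _))
  mul_smul g h p := Subtype.ext (Prod.ext (mul_smul _ _ _) (mul_smul _ _ _))

theorem op_smul (g : G) (p : Op D) : (g • p).1 = (g • p.1.1, g • p.1.2) := rfl

theorem burnside (H X : Type*) [Group H] [MulAction H X] [Fintype H] [Finite X] :
    ∑ g : H, Nat.card (MulAction.fixedBy X g) =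
      Nat.card (Quotient (MulAction.orbitRel H X)) * Fintype.card H := by
  classical
  have := Fintype.ofFinite X
  rw [Nat.card_eq_fintype_card, ← MulAction.sum_card_fixedBy_eq_card_orbits_mul_card_group H X]
  simp [Nat.card_eq_fintype_card]

theorem orbits_op [Finite F] [Finite V] :
    Nat.card F ≤ Nat.card (Quotient (MulAction.orbitRel G (Op D))) := by
  classical
  have := Fintype.ofFinite V
  let f : Op D → {t : F // psi t = -1} × Bool := fun p => (⟨_, p.2⟩, decide (0 < arf p.1.1))
  have hf : ∀ a b : Op D, MulAction.orbitRel G (Op D) a b → f a = f b := by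
    rintro a b ⟨g, rfl⟩
    refine Prod.ext (Subtype.ext ?_) ?_
    · change (g • b.1.1).1 (g • b.1.2) = b.1.1.1 b.1.2
      rw [smul_val, inv_smul_smul]
    · change decide (0 < arf (g • b.1.1)) = _
      rw [arf_smul]
  have hs : Function.Surjective (Quotient.lift f hf) := by
    rintro ⟨⟨t, ht⟩, b⟩
    have h1 : ∃ Q : Om D, decide (0 < arf Q) = b := by
      obtain ⟨Q0, hQ0⟩ := D.qf
      let Q : Om D := ⟨Q0, hQ0⟩
      by_cases h : decide (0 < arf Q) = b
      · exact ⟨Q, h⟩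
      · obtain ⟨z, hz⟩ := exists_val Q t
        refine ⟨shift Q z, ?_⟩
        rw [arf_shift, hz, ht]
        have := arf_ne Q
        cases b
        · simp at h ⊢; omega
        · simp at h ⊢; omega
    obtain ⟨Q, hQ⟩ := h1
    obtain ⟨z, hz⟩ := exists_val Q t
    refine ⟨Quotient.mk _ ⟨(Q, z), by rw [hz, ht]⟩, ?_⟩
    change f _ = _
    exact Prod.ext (Subtype.ext hz) hQ
  have h := Nat.card_le_card_of_surjective _ hs
  rw [Nat.card_prod] at h
  have h2 := card_psi (F := F)
  have h3 : Nat.card Bool = 2 := by simp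
  rw [h3] at h
  omega

theorem orbits_V (D : Sp F V G) [Finite V] : 2 ≤ Nat.card (Quotient (MulAction.orbitRel G V)) := by
  obtain ⟨a, b, ha, -⟩ := D.ex
  have : Nontrivial (Quotient (MulAction.orbitRel G V)) := by
    refine ⟨Quotient.mk _ 0, Quotient.mk _ a, fun h => ?_⟩
    obtain ⟨g, hg⟩ := Quotient.exact h
    change g • a = 0 at hg
    exact ha ((smul_eq_zero_iff_eq g).1 hg)
  exact Finite.one_lt_card

/-- move `v` to `v'` fixing `u` when `B v v' ≠ 0` -/
theorem move1 {u v v' : V} (h : D.B u v = D.B u v') (hv : D.B v v' ≠ 0) :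
    ∃ g : G, g • u = u ∧ g • v = v' := by
  obtain ⟨g, hg⟩ := D.trans (v' - v) (D.B v v')⁻¹
  refine ⟨g, ?_, ?_⟩
  · rw [hg, map_sub, h]; simp
  · rw [hg, map_sub, D.alt, sub_zero, inv_mul_cancel₀ hv]; simp

theorem exists_two (u v : V) (h : ∀ c : F, v ≠ c • u) : ∃ w, D.B u w = 0 ∧ D.B v w ≠ 0 := by
  obtain ⟨f, hf, hle⟩ := Submodule.exists_le_ker_of_notMem (K := F) (p := Submodule.span F {u})
    (v := v) (by
      rw [Submodule.mem_span_singleton]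
      rintro ⟨c, hc⟩
      exact h c hc.symm)
  obtain ⟨w, hw⟩ := D.rep f
  refine ⟨w, ?_, ?_⟩
  · rw [← hw]; exact hle (Submodule.mem_span_singleton_self u)
  · rw [← hw]; exact hf

theorem move2 {u v v' : V} (h : D.B u v = D.B u v') (hv : ∀ c : F, v ≠ c • u)
    (hv' : ∀ c : F, v' ≠ c • u) : ∃ g : G, g • u = u ∧ g • v = v' := by
  by_cases h0 : D.B v v' = 0
  · have h1 : ∃ w, D.B u w = 0 ∧ D.B v w ≠ 0 ∧ D.B v' w ≠ 0 := by
      obtain ⟨w1, a1, b1⟩ := exists_two (D := D) u v hv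
      obtain ⟨w2, a2, b2⟩ := exists_two (D := D) u v' hv'
      by_cases c1 : D.B v' w1 = 0
      · by_cases c2 : D.B v w2 = 0
        · exact ⟨w1 + w2, by simp [a1, a2], by simpa [c2] using b1, by simpa [c1] using b2⟩
        · exact ⟨w2, a2, c2, b2⟩
      · exact ⟨w1, a1, b1, c1⟩
    obtain ⟨w, a, b, c⟩ := h1
    obtain ⟨g1, e1, f1⟩ := move1 (D := D) (u := u) (v := v) (v' := v + w) (by simp [a])
      (by simpa [D.alt] using b)
    obtain ⟨g2, e2, f2⟩ := move1 (D := D) (u := u) (v := v + w) (v' := v') (by simp [a, h])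
      (by simpa [h0, D.symm w v'] using c)
    exact ⟨g2 * g1, by rw [mul_smul, e1, e2], by rw [mul_smul, f1, f2]⟩
  · exact move1 h h0

theorem move3 (D : Sp F V G) {u u' : V} (hu : u ≠ 0) (hu' : u' ≠ 0) : ∃ g : G, g • u = u' := by
  obtain ⟨g, -, hg⟩ := move2 (D := D) (u := 0) (v := u) (v' := u') (by simp) (fun c => by simpa using hu)
    (fun c => by simpa using hu')
  exact ⟨g, hg⟩

theorem orbits_VV (D : Sp F V G) [Finite F] [Finite V] :
    Nat.card (Quotient (MulAction.orbitRel G (V × V))) ≤ 2 * Nat.card F + 2 := by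
  classical
  let f : V × V → (Bool ⊕ (F ⊕ F)) := fun p =>
    if p.1 = 0 then Sum.inl (decide (p.2 = 0)) else
      if h : ∃ c : F, p.2 = c • p.1 then Sum.inr (Sum.inl h.choose) else
        Sum.inr (Sum.inr (D.B p.1 p.2))
  have hf : ∀ p r : V × V, f p = f r → ∃ g : G, g • r = p := by
    rintro ⟨u, v⟩ ⟨u', v'⟩ h
    simp only [f] at h
    by_cases hu : u = 0
    · by_cases hu' : u' = 0
      · subst hu hu'
        simp only [if_true, Sum.inl.injEq, decide_eq_decide] at h
        by_cases hv : v = 0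
        · exact ⟨1, by rw [one_smul, hv, h.1 hv]⟩
        · obtain ⟨g, hg⟩ := move3 D (u := v') (u' := v) (fun h' => hv (h.2 h')) hv
          exact ⟨g, Prod.ext (smul_zero g) hg⟩
      · rw [if_pos hu, if_neg hu'] at h
        split_ifs at h
    · by_cases hu' : u' = 0
      · rw [if_neg hu, if_pos hu'] at h
        split_ifs at h
      · rw [if_neg hu, if_neg hu'] at h
        obtain ⟨g, hg⟩ := move3 D hu' hu
        split_ifs at h with h1 h2 h2
        · simp only [Sum.inr.injEq, Sum.inl.injEq] at h
          have e1 := h1.choose_spec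
          have e2 := h2.choose_spec
          refine ⟨g, Prod.ext hg ?_⟩
          change g • v' = v
          rw [e1, e2, D.lin, hg, h]
        · simp at h
        · simp at h
        · simp only [Sum.inr.injEq] at h
          push Not at h1 h2
          obtain ⟨g2, e2, f2⟩ := move2 (D := D) (u := u) (v := g • v') (v' := v)
            (by rw [← hg, D.inv, hg, h]) (by
              intro c hc
              apply h2 c
              rw [← hg, ← D.lin] at hc
              exact MulAction.injective g hc) h1
          exact ⟨g2 * g, Prod.ext (by change (g2 * g) • u' = u; rw [mul_smul, hg, e2])
            (by change (g2 * g) • v' = v; rw [mul_smul, f2])⟩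
  have hinj : Function.Injective (fun x : Quotient (MulAction.orbitRel G (V × V)) => f x.out) := by
    intro x y hxy
    obtain ⟨g, hg⟩ := hf _ _ hxy
    rw [← x.out_eq, ← y.out_eq]
    exact Quotient.sound ⟨g, hg⟩
  have h := Nat.card_le_card_of_injective _ hinj
  rw [Nat.card_sum, Nat.card_sum] at h
  have h3 : Nat.card Bool = 2 := by simp
  omega

theorem fix_VV (y : G) [Finite V] : Nat.card (MulAction.fixedBy (V × V) y) =
    Nat.card (MulAction.fixedBy V y) * Nat.card (MulAction.fixedBy V y) := by
  rw [← Nat.card_prod]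
  exact Nat.card_congr
    { toFun := fun p => (⟨p.1.1, congrArg Prod.fst p.2⟩, ⟨p.1.2, congrArg Prod.snd p.2⟩)
      invFun := fun p => ⟨(p.1.1, p.2.1), Prod.ext p.1.2 p.2.2⟩
      left_inv := fun p => rfl
      right_inv := fun p => rfl }

theorem fix_op (y : G) [Finite F] [Finite V] : 2 * Nat.card (MulAction.fixedBy (Op D) y) ≤
    Nat.card (MulAction.fixedBy V y) * Nat.card (MulAction.fixedBy V y) := by
  classical
  obtain ⟨Q, hQ⟩ := exists_fix (D := D) y
  let K := MulAction.fixedBy V y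
  have := Fintype.ofFinite K
  have hd : ∀ Q' : Om D, ∃ z, Q' = shift Q z := exists_shift Q
  choose d hd using hd
  have hfix : ∀ Q' : Om D, y • Q' = Q' → y • d Q' = d Q' := by
    intro Q' h
    apply shift_inj (Q := Q)
    have h2 : y • shift Q (d Q') = shift Q (d Q') := by rw [← hd, h]
    rw [smul_shift, hQ] at h2
    exact h2
  let N := {p : K × K // psi (Q.1 p.1.1) * psi (Q.1 p.2.1) = -1}
  let f : MulAction.fixedBy (Op D) y → N := fun p =>
    have h1 : y • p.1.1.1 = p.1.1.1 := congrArg (fun r => r.1.1) p.2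
    have h2 : y • p.1.1.2 = p.1.1.2 := congrArg (fun r => r.1.2) p.2
    ⟨(⟨d p.1.1.1, hfix _ h1⟩, ⟨p.1.1.2 + d p.1.1.1, by
      rw [MulAction.mem_fixedBy, smul_add, h2, hfix _ h1]⟩), by
        have := p.1.2
        rw [hd p.1.1.1, psi_shift] at this
        exact this⟩
  have hf : Function.Injective f := by
    intro p r h
    have h1 : d p.1.1.1 = d r.1.1.1 := congrArg (fun t => t.1.1.1) h
    have h2 : p.1.1.2 + d p.1.1.1 = r.1.1.2 + d r.1.1.1 := congrArg (fun t => t.1.2.1) h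
    apply Subtype.ext; apply Subtype.ext; apply Prod.ext
    · rw [hd p.1.1.1, h1, ← hd]
    · rw [h1] at h2; exact add_right_cancel h2
  have hle := Nat.card_le_card_of_injective f hf
  have hsum : 0 ≤ ∑ p : K × K, psi (Q.1 p.1.1) * psi (Q.1 p.2.1) := by
    rw [Fintype.sum_prod_type]
    simp_rw [← Finset.mul_sum]
    rw [← Finset.sum_mul]
    exact mul_self_nonneg _
  have hval : ∀ p : K × K, psi (Q.1 p.1.1) * psi (Q.1 p.2.1) =
      1 - 2 * (if psi (Q.1 p.1.1) * psi (Q.1 p.2.1) = -1 then 1 else 0) := by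
    intro p
    rcases psi_cases (Q.1 p.1.1) with h | h <;> rcases psi_cases (Q.1 p.2.1) with h' | h' <;>
      rw [h, h'] <;> rfl
  rw [Finset.sum_congr rfl (fun p _ => hval p), Finset.sum_sub_distrib, ← Finset.mul_sum,
    Finset.sum_boole] at hsum
  have hN : Nat.card N = (Finset.univ.filter
      (fun p : K × K => psi (Q.1 p.1.1) * psi (Q.1 p.2.1) = -1)).card := by
    rw [Nat.card_eq_fintype_card, Fintype.card_subtype]
  rw [← hN] at hsum
  simp only [Finset.sum_const, Finset.card_univ, nsmul_eq_mul, mul_one,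
    ← Nat.card_eq_fintype_card] at hsum
  rw [Nat.card_prod] at hsum
  have : (2 * Nat.card N : ℤ) ≤ (Nat.card K * Nat.card K : ℕ) := by linarith
  have : 2 * Nat.card N ≤ Nat.card K * Nat.card K := by exact_mod_cast this
  change _ ≤ Nat.card K * Nat.card K
  omega

theorem fix_V (D : Sp F V G) (y : G) [Finite F] [Finite V] : Nat.card (MulAction.fixedBy V y) = 1 ∨
    Nat.card F ≤ Nat.card (MulAction.fixedBy V y) := by
  by_cases h : ∃ z : V, z ≠ 0 ∧ y • z = z
  · right
    obtain ⟨z, hz, hy⟩ := h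
    refine Nat.card_le_card_of_injective
      (fun c : F => (⟨c • z, by rw [MulAction.mem_fixedBy, D.lin, hy]⟩ :
        MulAction.fixedBy V y)) ?_
    intro a b hab
    exact smul_left_injective F hz (congrArg Subtype.val hab)
  · left
    push Not at h
    rw [Nat.card_eq_one_iff_unique]
    refine ⟨⟨fun a b => Subtype.ext ?_⟩, ⟨⟨0, smul_zero y⟩⟩⟩
    have key : ∀ a : MulAction.fixedBy V y, a.1 = 0 := fun a => by
      by_contra ha
      exact h _ ha a.2
    rw [key, key]

theorem main_count [Finite F] [Finite V] [Finite G] (D : Sp F V G) :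
    Nat.card F * Nat.card G ≤ Nat.card {y : G // ∀ x : G, ¬ InvGen x y} *
      (2 * (Nat.card F ^ 2 + Nat.card F + 1)) := by
  classical
  have := Fintype.ofFinite G
  set q := Nat.card F with hq
  have b1 := burnside G V
  have b2 := burnside G (V × V)
  have b3 := burnside G (Op D)
  have o1 := orbits_V D
  have o2 := orbits_VV D
  have o3 := orbits_op (D := D)
  let K : G → ℤ := fun y => Nat.card (MulAction.fixedBy V y)
  let P : G → ℤ := fun y => Nat.card (MulAction.fixedBy (Op D) y)
  have c1 : 2 * (Fintype.card G : ℤ) ≤ ∑ y, K y := by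
    have : 2 * Fintype.card G ≤ ∑ y : G, Nat.card (MulAction.fixedBy V y) := by
      rw [b1]; exact Nat.mul_le_mul_right _ o1
    simp only [K]
    exact_mod_cast this
  have c2 : ∑ y, K y * K y ≤ (2 * q + 2) * (Fintype.card G : ℤ) := by
    have : ∑ y : G, Nat.card (MulAction.fixedBy V y) * Nat.card (MulAction.fixedBy V y) ≤
        (2 * q + 2) * Fintype.card G := by
      simp_rw [← fix_VV]
      rw [b2]; exact Nat.mul_le_mul_right _ o2
    simp only [K]
    exact_mod_cast this
  have c3 : q * (Fintype.card G : ℤ) ≤ ∑ y, P y := by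
    have : q * Fintype.card G ≤ ∑ y : G, Nat.card (MulAction.fixedBy (Op D) y) := by
      rw [b3]; exact Nat.mul_le_mul_right _ o3
    simp only [P]
    exact_mod_cast this
  have key : ∀ y : G, 3 * P y - 2 * (K y * K y - (q + 1) * K y + q) ≤
      (2 * (q ^ 2 + q + 1)) * (if ∀ x : G, ¬ InvGen x y then 1 else 0) := by
    intro y
    split_ifs with h
    · have h1 : 2 * P y ≤ K y * K y := by
        have := fix_op (D := D) y
        simp only [P, K]
        exact_mod_cast this
      nlinarith [sq_nonneg (K y - 2 * (q + 1))]
    · have hP : P y = 0 := by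
        have : IsEmpty (MulAction.fixedBy (Op D) y) := by
          refine ⟨fun p => h fun x => ?_⟩
          exact not_invGen (congrArg (fun r => r.1.1) p.2) (congrArg (fun r => r.1.2) p.2) p.1.2 x
        simp only [P]
        simp
      have hK : 0 ≤ (K y - 1) * (K y - q) := by
        rcases fix_V D y with h | h
        · simp only [K]
          rw [h]; simp
        · have h1 : (q : ℤ) ≤ K y := by simp only [K]; exact_mod_cast h
          have h2 : (1 : ℤ) ≤ q := by
            have : 0 < q := Nat.card_pos
            exact_mod_cast this
          exact mul_nonneg (by linarith) (by linarith)
      rw [hP]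
      linarith
  have hs := Finset.sum_le_sum (fun y (_ : y ∈ Finset.univ) => key y)
  rw [← Finset.mul_sum, Finset.sum_boole, Finset.sum_sub_distrib, ← Finset.mul_sum,
    ← Finset.mul_sum, Finset.sum_add_distrib, Finset.sum_sub_distrib, ← Finset.mul_sum,
    Finset.sum_const, Finset.card_univ, nsmul_eq_mul] at hs
  have hN : Nat.card {y : G // ∀ x : G, ¬ InvGen x y} = (Finset.univ.filter
      (fun y : G => ∀ x : G, ¬ InvGen x y)).card := by
    rw [Nat.card_eq_fintype_card, Fintype.card_subtype]
  rw [← hN] at hs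
  have hfin : (q * Nat.card G : ℤ) ≤ Nat.card {y : G // ∀ x : G, ¬ InvGen x y} *
      (2 * (q ^ 2 + q + 1)) := by
    rw [Nat.card_eq_fintype_card (α := G)]
    have h5 : (0 : ℤ) ≤ q + 1 := by positivity
    nlinarith [mul_le_mul_of_nonneg_left c1 h5]
  exact_mod_cast hfin

end main


section inst
open Matrix

variable {m : ℕ} {F : Type} [Field F]

noncomputable instance spAct :
    DistribMulAction (Matrix.symplecticGroup (Fin m) F) (Fin m ⊕ Fin m → F) where
  smul A u := A.1 *ᵥ u
  one_smul u := Matrix.one_mulVec u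
  mul_smul A B u := (Matrix.mulVec_mulVec u A.1 B.1).symm
  smul_zero A := Matrix.mulVec_zero A.1
  smul_add A u w := Matrix.mulVec_add A.1 u w

theorem spAct_def (A : Matrix.symplecticGroup (Fin m) F) (u : Fin m ⊕ Fin m → F) :
    A • u = A.1 *ᵥ u := rfl

noncomputable def bil (m : ℕ) (F : Type) [Field F] :
    (Fin m ⊕ Fin m → F) →ₗ[F] (Fin m ⊕ Fin m → F) →ₗ[F] F :=
  Matrix.toLinearMap₂' F (Matrix.J (Fin m) F)

theorem bil_eq (u w : Fin m ⊕ Fin m → F) : bil m F u w = u ⬝ᵥ (Matrix.J (Fin m) F *ᵥ w) :=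
  Matrix.toLinearMap₂'_apply' _ _ _

theorem bil_sum (u w : Fin m ⊕ Fin m → F) :
    bil m F u w = ∑ i, (u (Sum.inr i) * w (Sum.inl i) - u (Sum.inl i) * w (Sum.inr i)) := by
  rw [bil_eq, Matrix.J]
  simp [dotProduct, Fintype.sum_sum_type, Matrix.fromBlocks_mulVec, Matrix.neg_mulVec]
  ring

theorem mem_of_bil {A : Matrix (Fin m ⊕ Fin m) (Fin m ⊕ Fin m) F}
    (h : ∀ u w, bil m F (A *ᵥ u) (A *ᵥ w) = bil m F u w) : A ∈ Matrix.symplecticGroup (Fin m) F := by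
  rw [SymplecticGroup.mem_iff']
  apply (Matrix.toLinearMap₂' F (n := Fin m ⊕ Fin m) (m := Fin m ⊕ Fin m) (S₁ := F) (S₂ := F)
    (N₂ := F)).injective
  refine LinearMap.ext₂ fun u w => ?_
  rw [Matrix.toLinearMap₂'_apply', Matrix.toLinearMap₂'_apply', ← bil_eq, ← h, bil_eq]
  rw [Matrix.mul_assoc, ← Matrix.mulVec_mulVec, ← Matrix.mulVec_mulVec,
    Matrix.dotProduct_mulVec u, Matrix.vecMul_transpose]

theorem bil_inv (A : Matrix.symplecticGroup (Fin m) F) (u w : Fin m ⊕ Fin m → F) :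
    bil m F (A.1 *ᵥ u) (A.1 *ᵥ w) = bil m F u w := by
  have h := SymplecticGroup.mem_iff'.1 A.2
  rw [bil_eq, bil_eq, ← Matrix.vecMul_transpose, ← Matrix.dotProduct_mulVec]
  rw [Matrix.mulVec_mulVec, Matrix.mulVec_mulVec, h]

variable [CharP F 2]

theorem bil_symm (u w : Fin m ⊕ Fin m → F) : bil m F u w = bil m F w u := by
  rw [bil_sum, bil_sum]
  refine Finset.sum_congr rfl fun i _ => ?_
  rw [CharTwo.sub_eq_add, CharTwo.sub_eq_add]; ring

theorem bil_alt (u : Fin m ⊕ Fin m → F) : bil m F u u = 0 := by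
  rw [bil_sum]
  refine Finset.sum_eq_zero fun i _ => ?_
  ring

noncomputable def spData (hm : 2 ≤ m) :
    Sp F (Fin m ⊕ Fin m → F) (Matrix.symplecticGroup (Fin m) F) where
  B := bil m F
  alt := bil_alt
  symm := bil_symm
  inv := fun g u w => bil_inv g u w
  lin := fun g c u => Matrix.mulVec_smul _ _ _
  rep := fun f => by
    refine ⟨-(Matrix.J (Fin m) F *ᵥ fun i => f (Pi.single i 1)), fun u => ?_⟩
    rw [bil_eq, Matrix.mulVec_neg, Matrix.mulVec_mulVec, Matrix.J_squared, Matrix.neg_mulVec,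
      neg_neg, Matrix.one_mulVec]
    conv_lhs => rw [LinearMap.pi_apply_eq_sum_univ f u]
    simp only [dotProduct, smul_eq_mul]
    refine Finset.sum_congr rfl fun i _ => ?_
    congr 2
    ext j
    simp [Pi.single_apply, eq_comm]
  trans := fun a s => by
    have h : ∀ u, (1 + s • Matrix.vecMulVec a (Matrix.J (Fin m) F *ᵥ a)) *ᵥ u =
        u + (s * bil m F u a) • a := by
      intro u
      rw [Matrix.add_mulVec, Matrix.one_mulVec, Matrix.smul_mulVec, Matrix.vecMulVec_mulVec,
        bil_eq, dotProduct_comm u, mul_smul]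
      simp
    refine ⟨⟨_, mem_of_bil (A := 1 + s • Matrix.vecMulVec a (Matrix.J (Fin m) F *ᵥ a)) ?_⟩, h⟩
    intro u w
    rw [h, h]
    simp only [map_add, map_smul, LinearMap.add_apply, LinearMap.smul_apply, smul_eq_mul, bil_alt]
    rw [bil_symm a w]
    have := CharTwo.add_self_eq_zero (s * bil m F u a * bil m F w a)
    linear_combination this
  ex := by
    refine ⟨Pi.single (Sum.inl ⟨0, by omega⟩) 1, Pi.single (Sum.inl ⟨1, by omega⟩) 1, ?_, ?_, ?_, ?_⟩
    · simp
    · simp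
    · intro h
      have := congrFun h (Sum.inl ⟨0, by omega⟩)
      simp [Pi.single_apply] at this
    · rw [bil_sum]
      simp [Pi.single_apply]
  qf := by
    refine ⟨fun u => ∑ i, u (Sum.inl i) * u (Sum.inr i), fun u w => ?_, fun c u => ?_⟩
    · rw [bil_sum, ← Finset.sum_add_distrib, ← Finset.sum_add_distrib]
      refine Finset.sum_congr rfl fun i _ => ?_
      rw [CharTwo.sub_eq_add, Pi.add_apply, Pi.add_apply]; ring
    · rw [Finset.mul_sum]
      refine Finset.sum_congr rfl fun i _ => ?_
      simp only [Pi.smul_apply, smul_eq_mul]; ring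

end inst

end SpAux

theorem stmt_14 :
    ∃ M : ℕ, ∀ m : ℕ, M ≤ m →
      ∀ (F : Type) [Field F] [Fintype F], Even (Fintype.card F) →
        (Nat.card {y : Matrix.symplecticGroup (Fin m) F //
            ∀ x : Matrix.symplecticGroup (Fin m) F, ¬ InvGen x y} : ℝ) ≥
          (Nat.card (Matrix.symplecticGroup (Fin m) F) : ℝ) /
            (4 * (Fintype.card F : ℝ) ^ 3) ∧
        (Nat.card {y : Matrix.symplecticGroup (Fin m) F //
            ∃ x : Matrix.symplecticGroup (Fin m) F, InvGen x y} : ℝ) ≤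
          (1 - 1 / (4 * (Fintype.card F : ℝ) ^ 3)) *
            Nat.card (Matrix.symplecticGroup (Fin m) F) := by
  refine ⟨2, fun m hm F _ _ hF => ?_⟩
  have hc : ringChar F = 2 := FiniteField.even_card_iff_char_two.2 (Nat.even_iff.1 hF)
  have : CharP F 2 := hc ▸ ringChar.charP F
  have hfin : Finite (Matrix.symplecticGroup (Fin m) F) := by
    have : Finite (Matrix (Fin m ⊕ Fin m) (Fin m ⊕ Fin m) F) := by unfold Matrix; infer_instance
    infer_instance
  have key := SpAux.main_count (SpAux.spData (F := F) hm)
  have hcomp : Nat.card {y : Matrix.symplecticGroup (Fin m) F //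
      ∀ x : Matrix.symplecticGroup (Fin m) F, ¬ InvGen x y} +
      Nat.card {y : Matrix.symplecticGroup (Fin m) F //
      ∃ x : Matrix.symplecticGroup (Fin m) F, InvGen x y} =
      Nat.card (Matrix.symplecticGroup (Fin m) F) := by
    classical
    rw [← Nat.card_congr (Equiv.sumCompl (fun y : Matrix.symplecticGroup (Fin m) F =>
      ∀ x : Matrix.symplecticGroup (Fin m) F, ¬ InvGen x y)), Nat.card_sum]
    congr 1
    refine Nat.card_congr (Equiv.subtypeEquivRight fun y => ?_)
    push Not
    rfl
  have hq : 2 ≤ Fintype.card F := Fintype.one_lt_card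
  rw [Nat.card_eq_fintype_card (α := F)] at key
  generalize Nat.card {y : Matrix.symplecticGroup (Fin m) F //
      ∀ x : Matrix.symplecticGroup (Fin m) F, ¬ InvGen x y} = N at *
  generalize Nat.card {y : Matrix.symplecticGroup (Fin m) F //
      ∃ x : Matrix.symplecticGroup (Fin m) F, InvGen x y} = N' at *
  generalize Nat.card (Matrix.symplecticGroup (Fin m) F) = g at *
  generalize Fintype.card F = q at *
  have key' : (q * g : ℝ) ≤ N * (2 * (q ^ 2 + q + 1)) := by exact_mod_cast key
  have hq' : (2 : ℝ) ≤ q := by exact_mod_cast hq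
  have hcomp' : (N + N' : ℝ) = g := by exact_mod_cast hcomp
  have hN : (0 : ℝ) ≤ N := Nat.cast_nonneg _
  have hpos : (0 : ℝ) < 4 * (q : ℝ) ^ 3 := by positivity
  have h1 : (g : ℝ) / (4 * (q : ℝ) ^ 3) ≤ N := by
    rw [div_le_iff₀ hpos]
    have h2 : (2 * ((q : ℝ) ^ 2 + q + 1)) ≤ q * (4 * (q : ℝ) ^ 3) := by
      nlinarith [sq_nonneg ((q : ℝ) ^ 2 - 4), mul_nonneg (sub_nonneg.2 hq') (sub_nonneg.2 hq')]
    have h3 := mul_le_mul_of_nonneg_left h2 hN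
    have h4 : (q : ℝ) * g ≤ q * (N * (4 * (q : ℝ) ^ 3)) := by linarith
    exact le_of_mul_le_mul_left h4 (by linarith)
  refine ⟨h1, ?_⟩
  have h5 : (1 - 1 / (4 * (q : ℝ) ^ 3)) * (g : ℝ) = g - g / (4 * (q : ℝ) ^ 3) := by ring
  rw [h5]
  linarith
end

section
/- There exists a real constant δ > 0 such that for every natural number m ≥ 2, every finite field F of even order, and every element x of G = Sp_{2m}(F), the number of y ∈ G for which {x, y} invariably generates G is at most (1 − δ) · |G|. -/
set_option linter.unusedSectionVars false
structure Symp (F V G : Type) [Field F] [AddCommGroup V] [Module F V] [Group G]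
    [DistribMulAction G V] (B : V →ₗ[F] V →ₗ[F] F) : Prop where
  alt : ∀ x, B x x = 0
  nondeg : ∀ x, (∀ y, B x y = 0) → x = 0
  inv : ∀ (g : G) x y, B (g • x) (g • y) = B x y
  full : ∀ T : V →ₗ[F] V, (∀ x y, B (T x) (T y) = B x y) → ∃ g : G, ∀ x, g • x = T x
  big : ∀ v, ∃ w, B v w = 0 ∧ ∀ c : F, w ≠ c • v
  smulc : ∀ (g : G) (c : F) (x : V), g • (c • x) = c • (g • x)

structure IsQ {F V : Type} [Field F] [AddCommGroup V] [Module F V]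
    (B : V →ₗ[F] V →ₗ[F] F) (Q : V → F) : Prop where
  sm : ∀ (a : F) x, Q (a • x) = a ^ 2 * Q x
  ad : ∀ x y, Q (x + y) = Q x + Q y + B x y

namespace Symp

variable {F V G : Type} [Field F] [Finite F] [CharP F 2] [AddCommGroup V] [Module F V] [Finite V]
  [Group G] [Finite G] [DistribMulAction G V] {B : V →ₗ[F] V →ₗ[F] F} {Q Q' : V → F}

theorem symm (S : Symp F V G B) (x y : V) : B x y = B y x := by
  have h := S.alt (x + y)
  simp only [map_add, LinearMap.add_apply, S.alt] at h
  have h2 : (2 : F) = 0 := CharTwo.two_eq_zero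
  linear_combination h - B y x * h2

theorem vadd (F : Type) [Field F] [CharP F 2] {V : Type} [AddCommGroup V] [Module F V] (x : V) :
    x + x = 0 := by
  rw [← two_smul F x, CharTwo.two_eq_zero, zero_smul]

theorem fun_rep (S : Symp F V G B) (φ : V →ₗ[F] F) : ∃ w, ∀ x, φ x = B w x := by
  have hi : Function.Injective B := by
    rw [injective_iff_map_eq_zero]
    intro a ha
    exact S.nondeg a fun y => by rw [ha]; rfl
  have : Module.finrank F V = Module.finrank F (V →ₗ[F] F) := (Subspace.dual_finrank_eq).symm
  obtain ⟨w, hw⟩ := (LinearMap.injective_iff_surjective_of_finrank_eq_finrank this).1 hi φ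
  exact ⟨w, fun x => by rw [hw]⟩

theorem par (S : Symp F V G B) (u v : V) (h : ∀ w, B v w = 0 → B u w = 0) : ∃ c : F, u = c • v := by
  by_cases hv : ∀ y, B v y = 0
  · exact ⟨0, by rw [zero_smul]; exact S.nondeg u fun y => h y (hv y)⟩
  push Not at hv
  obtain ⟨z, hz⟩ := hv
  refine ⟨B u z / B v z, ?_⟩
  rw [← sub_eq_zero]
  apply S.nondeg
  intro w
  have := h (w - (B v w / B v z) • z) (by simp [hz])
  simp only [map_sub, map_smul, smul_eq_mul, LinearMap.sub_apply, LinearMap.smul_apply] at this ⊢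
  field_simp at this ⊢
  linear_combination this

theorem qdiff (hQ : IsQ B Q) (hQ' : IsQ B Q') : ∃ μ : V →ₗ[F] F, ∀ x, Q' x = Q x + μ x ^ 2 := by
  have h2 : (2 : F) = 0 := CharTwo.two_eq_zero
  have hi : Function.Injective (fun a : F => a ^ 2) := fun a b h => by
    have h : a ^ 2 = b ^ 2 := h
    have : (a - b) ^ 2 = 0 := by linear_combination h + (b ^ 2 - a * b) * h2
    exact sub_eq_zero.1 (by simpa using this)
  have hs := Finite.injective_iff_surjective.1 hi
  choose r hr using hs
  simp only at hr
  refine ⟨⟨⟨fun x => r (Q' x + Q x), ?_⟩, ?_⟩, ?_⟩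
  · intro x y
    apply hi
    simp only [hr, hQ.ad, hQ'.ad]
    rw [add_sq, hr, hr]
    linear_combination (B x y - r (Q' x + Q x) * r (Q' y + Q y)) * h2
  · intro a x
    apply hi
    simp only [hr, hQ.sm, hQ'.sm, RingHom.id_apply, smul_eq_mul, mul_pow]
    ring
  · intro x
    simp only [LinearMap.coe_mk, AddHom.coe_mk, hr]
    linear_combination - Q x * h2

/-- the linear map of g -/
def lin (S : Symp F V G B) (g : G) : V →ₗ[F] V where
  toFun x := g • x
  map_add' := smul_add g
  map_smul' c x := S.smulc g c x

/-- fixed space -/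
def fix (S : Symp F V G B) (g : G) : Submodule F V := LinearMap.ker (S.lin g - LinearMap.id)

theorem mem_fix (S : Symp F V G B) (g : G) (x : V) : x ∈ S.fix g ↔ g • x = x := by
  simp [fix, lin, sub_eq_zero]

theorem factor (S : Symp F V G B) (g : G) (φ : V →ₗ[F] F) (h : ∀ x, g • x = x → φ x = 0) :
    ∃ μ : V →ₗ[F] F, ∀ x, φ x = μ (g • x) + μ x := by
  have : φ ∈ (S.fix g).dualAnnihilator := by
    rw [Submodule.mem_dualAnnihilator]
    intro w hw
    exact h w ((S.mem_fix g w).1 hw)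
  rw [fix, ← LinearMap.range_dualMap_eq_dualAnnihilator_ker] at this
  obtain ⟨μ, hμ⟩ := this
  refine ⟨μ, fun x => ?_⟩
  rw [← hμ]
  simp [lin, CharTwo.sub_eq_add]

/-- Dye's theorem -/
theorem dye (S : Symp F V G B) (hQ : IsQ B Q) (g : G) :
    ∃ Q', IsQ B Q' ∧ ∀ x, Q' (g • x) = Q' x := by
  have h2 : (2 : F) = 0 := CharTwo.two_eq_zero
  have hg : IsQ B (fun x => Q (g • x)) :=
    ⟨fun a x => by rw [S.smulc, hQ.sm], fun x y => by rw [smul_add, hQ.ad, S.inv]⟩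
  obtain ⟨l, hl⟩ := qdiff hQ hg
  obtain ⟨μ, hμ⟩ := S.factor g l (fun x hx => by
    have := hl x
    rw [hx] at this
    simpa using this)
  refine ⟨fun x => Q x + μ x ^ 2, ⟨fun a x => ?_, fun x y => ?_⟩, fun x => ?_⟩
  · simp only [hQ.sm, map_smul, smul_eq_mul]; ring
  · simp only [hQ.ad, map_add]; linear_combination μ x * μ y * h2
  · simp only [hl, hμ]; linear_combination (μ (g • x) * μ x + μ (g • x) ^ 2) * h2

theorem uniq (S : Symp F V G B) (hQ : IsQ B Q) (hQ' : IsQ B Q') (g : G)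
    (hg : ∀ x : V, g • x = x → x = 0) (h : ∀ x, Q (g • x) = Q x) (h' : ∀ x, Q' (g • x) = Q' x) :
    Q = Q' := by
  have h2 : (2 : F) = 0 := CharTwo.two_eq_zero
  obtain ⟨μ, hμ⟩ := qdiff hQ hQ'
  have h0 : ∀ x, μ (g • x - x) = 0 := by
    intro x
    have h1 := hμ (g • x)
    rw [h', h, hμ x] at h1
    have : (μ (g • x) - μ x) ^ 2 = 0 := by
      linear_combination - h1 + (μ x ^ 2 - μ (g • x) * μ x) * h2
    rw [map_sub]
    simpa using this
  have hi : Function.Injective (S.lin g - LinearMap.id : V →ₗ[F] V) := by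
    rw [← LinearMap.ker_eq_bot, eq_bot_iff]
    intro x hx
    exact hg x ((S.mem_fix g x).1 hx)
  have hs := LinearMap.injective_iff_surjective.1 hi
  funext x
  obtain ⟨y, rfl⟩ := hs x
  have := h0 y
  rw [hμ]
  simp [lin, this] 

/-- isometry group -/
def O (G : Type) [Group G] [DistribMulAction G V] (Q : V → F) : Subgroup G where
  carrier := {g | ∀ x, Q (g • x) = Q x}
  mul_mem' {a b} ha hb x := by rw [mul_smul, ha, hb]
  one_mem' x := by rw [one_smul]
  inv_mem' {a} ha x := by rw [← ha, smul_inv_smul]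

theorem full' (S : Symp F V G B) (hQ : IsQ B Q) (T : V →ₗ[F] V) (h : ∀ x, Q (T x) = Q x) :
    ∃ g ∈ O G Q, ∀ x, g • x = T x := by
  obtain ⟨g, hg⟩ := S.full T (fun x y => by
    have h1 := hQ.ad (T x) (T y)
    rw [← map_add, h, h, h, hQ.ad] at h1
    linear_combination -h1)
  exact ⟨g, fun x => by rw [hg, h], hg⟩

theorem ns (S : Symp F V G B) (hQ : IsQ B Q) (v : V) : ∃ u, B v u = 0 ∧ Q u ≠ 0 := by
  by_contra! hc
  obtain ⟨w, hw, hw'⟩ := S.big v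
  have : ¬ ∀ z, B v z = 0 → B w z = 0 := fun h => by
    obtain ⟨c, hc⟩ := S.par w v h
    exact hw' c hc
  push Not at this
  obtain ⟨z, hz, hz'⟩ := this
  have h1 := hQ.ad w z
  rw [hc w hw, hc z hz, hc (w + z) (by rw [map_add, hw, hz, add_zero])] at h1
  simp at h1
  exact hz' h1.symm

theorem sing (S : Symp F V G B) (hQ : IsQ B Q) : ∃ u, u ≠ 0 ∧ Q u = 0 := by
  have h2 : (2 : F) = 0 := CharTwo.two_eq_zero
  obtain ⟨v, -, hv'⟩ := S.ns hQ 0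
  obtain ⟨w, hw, hw'⟩ := S.big v
  have hi : Function.Injective (fun a : F => a ^ 2) := fun a b h => by
    have h : a ^ 2 = b ^ 2 := h
    have : (a - b) ^ 2 = 0 := by linear_combination h + (b ^ 2 - a * b) * h2
    exact sub_eq_zero.1 (by simpa using this)
  obtain ⟨a, ha⟩ := Finite.injective_iff_surjective.1 hi (Q w / Q v)
  simp only at ha
  refine ⟨w - a • v, fun h => hw' a (sub_eq_zero.1 h), ?_⟩
  rw [sub_eq_add_neg, ← neg_smul, hQ.ad, hQ.sm, map_smul, S.symm, hw, neg_sq, ha]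
  field_simp
  simp only [smul_eq_mul, mul_zero, add_zero]
  linear_combination Q w * h2

theorem refl (S : Symp F V G B) (hQ : IsQ B Q) (u : V) (hu : Q u ≠ 0) :
    ∃ t ∈ O G Q, ∀ x, t • x = x + (B x u / Q u) • u := by
  have h2 : (2 : F) = 0 := CharTwo.two_eq_zero
  obtain ⟨t, ht, h⟩ := S.full' hQ (LinearMap.id + (((Q u)⁻¹ • B u).smulRight u)) (fun x => by
    simp only [LinearMap.add_apply, LinearMap.id_apply, LinearMap.smulRight_apply,
      LinearMap.smul_apply, smul_eq_mul, hQ.ad, hQ.sm, map_smul]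
    rw [S.symm x u]
    field_simp
    linear_combination B u x ^ 2 * h2)
  refine ⟨t, ht, fun x => ?_⟩
  rw [h]
  simp [S.symm x u, div_eq_inv_mul]

theorem proper (S : Symp F V G B) (hQ : IsQ B Q) : O G Q ≠ ⊤ := by
  have h2 : (2 : F) = 0 := CharTwo.two_eq_zero
  obtain ⟨u, hu, hu0⟩ := S.sing hQ
  obtain ⟨g, hg⟩ := S.full (LinearMap.id + ((B u).smulRight u)) (fun x y => by
    simp only [LinearMap.add_apply, LinearMap.id_apply, LinearMap.smulRight_apply,
      LinearMap.smul_apply, smul_eq_mul, map_smul, map_add, S.alt]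
    rw [S.symm x u]
    linear_combination B u x * B u y * h2)
  intro h
  apply hu
  apply S.nondeg
  intro x
  have h1 : g ∈ O G Q := by rw [h]; trivial
  have h3 := h1 x
  rw [hg] at h3
  simp only [LinearMap.add_apply, LinearMap.id_apply, LinearMap.smulRight_apply,
      smul_eq_mul, hQ.ad, hQ.sm, map_smul, hu0, S.symm x u] at h3
  have : B u x ^ 2 = 0 := by linear_combination h3
  simpa using this

/-- Witt's theorem for vectors -/
theorem witt (S : Symp F V G B) (hQ : IsQ B Q) (u v : V) (hu : u ≠ 0) (hv : v ≠ 0)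
    (h : Q u = Q v) : ∃ g ∈ O G Q, g • u = v := by
  have h2 : (2 : F) = 0 := CharTwo.two_eq_zero
  have key : ∀ u v, Q u = Q v → B u v ≠ 0 → ∃ g ∈ O G Q, g • u = v := by
    intro u v h hb
    have hs : Q (u + v) = B u v := by
      rw [hQ.ad, h]; linear_combination Q v * h2
    obtain ⟨t, ht, h'⟩ := S.refl hQ (u + v) (by rwa [hs])
    refine ⟨t, ht, ?_⟩
    rw [h', hs, map_add, S.alt, zero_add, div_self hb, one_smul, ← add_assoc, vadd F, zero_add]
  by_cases hb : B u v = 0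
  swap
  · exact key u v h hb
  by_cases hp : ∃ a : F, v = a • u
  · obtain ⟨a, rfl⟩ := hp
    have ha : a ≠ 0 := by rintro rfl; simp at hv
    by_cases hq : Q u = 0
    · have : ¬ ∀ z, B u z = 0 := fun h => hu (S.nondeg u h)
      push Not at this
      obtain ⟨z, hz⟩ := this
      have hw : Q (z + (Q z / B u z) • u) = 0 := by
        rw [hQ.ad, hQ.sm, hq, map_smul, S.symm z u, smul_eq_mul]
        rw [mul_zero, add_zero, div_mul_cancel₀ _ hz]
        linear_combination Q z * h2
      have hbw : B u (z + (Q z / B u z) • u) = B u z := by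
        rw [map_add, map_smul, S.alt]; simp
      obtain ⟨g, hg, h1⟩ := key u _ (hq.trans hw.symm) (by rwa [hbw])
      obtain ⟨g', hg', h1'⟩ := key (z + (Q z / B u z) • u) (a • u)
        (by rw [hw, ← h, hq]) (by
          rw [map_smul, S.symm, hbw]; simp [ha, hz])
      exact ⟨g' * g, mul_mem hg' hg, by rw [mul_smul, h1, h1']⟩
    · rw [hQ.sm] at h
      have : a = 1 := by
        have h3 : (a - 1) ^ 2 * Q u = 0 := by linear_combination -h + (1 - a) * Q u * h2
        have := (mul_eq_zero.1 h3).resolve_right hq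
        exact sub_eq_zero.1 (by simpa using this)
      exact ⟨1, one_mem _, by rw [this]; simp⟩
  · have hpar : ¬ ∀ w, B (u + v) w = 0 → B u w = 0 := by
      intro hh
      obtain ⟨c, hc⟩ := S.par u (u + v) hh
      by_cases hc0 : c = 0
      · rw [hc0, zero_smul] at hc; exact hu hc
      · apply hp
        refine ⟨c⁻¹ - 1, ?_⟩
        rw [sub_smul, one_smul]
        nth_rewrite 1 [hc]
        rw [smul_smul, inv_mul_cancel₀ hc0, one_smul]
        abel
    push Not at hpar
    obtain ⟨w, hw, hw'⟩ := hpar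
    obtain ⟨w, hw, hw'⟩ : ∃ w, B (u + v) w = 0 ∧ B u w = 1 :=
      ⟨(B u w)⁻¹ • w, by rw [map_smul, hw, smul_zero], by rw [map_smul]; simp [hw']⟩
    set s := u + v with hs
    have hQs : Q s = 0 := by rw [hs, hQ.ad, h, hb]; linear_combination Q v * h2
    obtain ⟨g, hg, h1⟩ := S.full' hQ (LinearMap.id + (B w).smulRight s + (B s).smulRight w
        + (Q w • B s).smulRight s) (fun x => by
      simp only [LinearMap.add_apply, LinearMap.id_apply, LinearMap.smulRight_apply,
        LinearMap.smul_apply, smul_eq_mul, map_smul, map_add, hQ.ad, hQ.sm, S.alt, hQs, S.symm x s,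
        S.symm x w, hw, S.symm w s]
      linear_combination (B s x * B w x + Q w * B s x ^ 2) * h2)
    refine ⟨g, hg, ?_⟩
    have hsu : B s u = 0 := by rw [hs, map_add, LinearMap.add_apply, S.alt, S.symm, hb, add_zero]
    rw [h1]
    simp only [LinearMap.add_apply, LinearMap.id_apply, LinearMap.smulRight_apply,
        LinearMap.smul_apply, smul_eq_mul, hsu, S.symm w u, hw', one_smul, mul_zero, zero_smul,
        add_zero]
    rw [hs, ← add_assoc, vadd F, zero_add]


theorem arith (a d q : ℕ) (hq : 2 ≤ q) (h : 2 * (d + q ^ 2 * a) ≤ (q + 1) * (2 * (a + d))) :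
    2 * (a + d) ≤ 6 * d := by
  by_contra! hlt
  have h7 : 2 * d + 1 ≤ a := by omega
  obtain ⟨r, rfl⟩ := Nat.exists_eq_add_of_le hq
  obtain ⟨s, rfl⟩ := Nat.exists_eq_add_of_le h7
  ring_nf at h
  nlinarith [Nat.zero_le (r * d), Nat.zero_le (r * s), Nat.zero_le (r ^ 2 * d), Nat.zero_le (r ^ 2 * s)]

theorem parity1 (S : Symp F V G B) (hQ : IsQ B Q) (u : V) (hu : Q u ≠ 0) (t g : G)
    (ht : ∀ x, t • x = x + (B x u / Q u) • u) (c : V) (hc : g • c = c)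
    (hcu : B c u ≠ 0) : Module.finrank F (S.fix g) = Module.finrank F (S.fix (g * t)) + 1 := by
  have he : S.fix (g * t) = S.fix g ⊓ LinearMap.ker (B u) := by
    ext x
    rw [Submodule.mem_inf, mem_fix, mem_fix, LinearMap.mem_ker, mul_smul, ht]
    constructor
    · intro h
      have h0 : B x u = 0 := by
        have h1 := congrArg (B c) h
        rw [smul_add, map_add] at h1
        nth_rewrite 1 [← hc] at h1
        nth_rewrite 2 [← hc] at h1
        rw [S.smulc, (B (g • c)).map_smul, S.inv, S.inv] at h1
        have : B x u / Q u * B c u = 0 := by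
          simpa using h1
        simpa [hu, hcu] using this
      refine ⟨?_, by rw [S.symm, h0]⟩
      simpa [h0] using h
    · rintro ⟨h, h'⟩
      rw [S.symm x u, h']
      simpa using h
  have h1 := LinearMap.finrank_range_add_finrank_ker ((B u).domRestrict (S.fix g))
  have h3 : LinearMap.range ((B u).domRestrict (S.fix g)) = ⊤ := by
    rw [LinearMap.range_eq_top]
    apply LinearMap.surjective
    intro h0
    apply hcu
    rw [S.symm]
    exact congrArg (fun f => f ⟨c, (S.mem_fix g c).2 hc⟩) h0
  rw [h3, finrank_top, Module.finrank_self] at h1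
  have h4 : Module.finrank F (LinearMap.ker ((B u).domRestrict (S.fix g)))
      = Module.finrank F (S.fix (g * t)) := by
    have h5 : Submodule.map (S.fix g).subtype (LinearMap.ker ((B u).domRestrict (S.fix g)))
        = S.fix g ⊓ LinearMap.ker (B u) := by
      ext x
      simp [LinearMap.mem_ker, and_comm]
    rw [he, ← h5, Submodule.finrank_map_subtype_eq (S.fix g)]
  omega

theorem parity (S : Symp F V G B) (hQ : IsQ B Q) (u : V) (hu : Q u ≠ 0) (t g : G)
    (ht : ∀ x, t • x = x + (B x u / Q u) • u) (hg : g ∈ O G Q) :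
    (Even (Module.finrank F (S.fix (g * t))) ↔ ¬ Even (Module.finrank F (S.fix g))) := by
  have h2 : (2 : F) = 0 := CharTwo.two_eq_zero
  by_cases hc : ∃ c, g • c = c ∧ B c u ≠ 0
  · obtain ⟨c, hc, hcu⟩ := hc
    rw [S.parity1 hQ u hu t g ht c hc hcu, Nat.even_add_one, not_not]
  push Not at hc
  obtain ⟨μ, hμ⟩ := S.factor g (B u) (fun x hx => by rw [S.symm]; exact hc x hx)
  obtain ⟨w, hw⟩ := S.fun_rep μ
  have hu' : u = g⁻¹ • w + w := by
    rw [← sub_eq_zero]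
    apply S.nondeg
    intro y
    rw [map_sub, LinearMap.sub_apply, hμ, hw, hw, map_add, LinearMap.add_apply,
      ← S.inv g (g⁻¹ • w), smul_inv_smul]
    ring
  have hwu : B w u = Q u := by
    have h1 : Q (g⁻¹ • w) = Q w := (inv_mem hg) w
    have h3 : g⁻¹ • w = u + w := by rw [hu', add_assoc, vadd F, add_zero]
    rw [h3, hQ.ad, S.symm u w] at h1
    linear_combination h1 - Q u * h2
  have htw : t • w = g⁻¹ • w := by
    rw [ht, hwu, div_self hu, one_smul]
    nth_rewrite 1 [hu']
    rw [add_comm, add_assoc, vadd F, add_zero]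
  have hfix : S.fix (g * t * t) = S.fix g := by
    ext x
    rw [mem_fix, mem_fix, mul_smul, mul_smul]
    have : t • t • x = x := by
      rw [ht (t • x), ht x, map_add, map_smul, LinearMap.add_apply, LinearMap.smul_apply, S.alt,
        smul_zero, add_zero, add_assoc, vadd F, add_zero]
    rw [this]
  have := S.parity1 hQ u hu t (g * t) ht w (by rw [mul_smul, htw, smul_inv_smul]) (by rwa [hwu])
  rw [this, hfix, Nat.even_add_one]

open Classical in
theorem half (S : Symp F V G B) (hQ : IsQ B Q) [Fintype G] (v : V) :
    2 * (Finset.univ.filter (fun g : G => (g ∈ O G Q ∧ g • v = v) ∧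
        Even (Module.finrank F (S.fix g)))).card
      = (Finset.univ.filter (fun g : G => g ∈ O G Q ∧ g • v = v)).card := by
  obtain ⟨u, hvu, hu⟩ := S.ns hQ v
  obtain ⟨t, htO, ht⟩ := S.refl hQ u hu
  have htv : t • v = v := by rw [ht, hvu]; simp
  have h1 := Finset.card_filter_add_card_filter_not
    (s := Finset.univ.filter (fun g : G => g ∈ O G Q ∧ g • v = v))
    (fun g => Even (Module.finrank F (S.fix g)))
  rw [Finset.filter_filter, Finset.filter_filter] at h1
  rw [← h1, two_mul]
  congr 1
  have hmem : ∀ g : G, (g * t ∈ O G Q ∧ (g * t) • v = v) ↔ (g ∈ O G Q ∧ g • v = v) := by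
    intro g
    rw [Subgroup.mul_mem_cancel_right _ htO, mul_smul, htv]
  apply Finset.card_bij (fun g _ => g * t)
  · intro g hg
    simp only [Finset.mem_filter, Finset.mem_univ, true_and] at hg ⊢
    rw [hmem, S.parity hQ u hu t g ht hg.1.1, not_not]
    exact hg
  · intro a _ b _ h
    exact mul_right_cancel h
  · intro g hg
    simp only [Finset.mem_filter, Finset.mem_univ, true_and] at hg
    have h3 : (g * t⁻¹) * t = g := by group
    refine ⟨g * t⁻¹, ?_, h3⟩
    simp only [Finset.mem_filter, Finset.mem_univ, true_and]
    have h4 := (hmem (g * t⁻¹))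
    rw [h3] at h4
    have h5 := h4.1 hg.1
    refine ⟨h5, ?_⟩
    have h6 := S.parity hQ u hu t _ ht h5.1
    rw [h3] at h6
    tauto

open Classical in
theorem burnside (S : Symp F V G B) (hQ : IsQ B Q) [Fintype G] [Fintype V] :
    ∑ v : V, (Finset.univ.filter (fun g : G => g ∈ O G Q ∧ g • v = v)).card
      ≤ (Nat.card F + 1) * (Finset.univ.filter (fun g : G => g ∈ O G Q)).card := by
  have hF := Fintype.ofFinite F
  have hb := MulAction.sum_card_fixedBy_eq_card_orbits_mul_card_group (O G Q) V
  have h1 : Fintype.card (Quotient (MulAction.orbitRel (O G Q) V)) ≤ Nat.card F + 1 := by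
    rw [Nat.card_eq_fintype_card, ← Fintype.card_option]
    apply Fintype.card_le_of_injective
      (fun ω => if ω.out = 0 then none else some (Q ω.out))
    intro a b hab
    rw [← Quotient.out_eq a, ← Quotient.out_eq b]
    simp only at hab
    split_ifs at hab with ha hb hb
    · rw [ha, hb]
    · obtain ⟨g, hg, h⟩ := S.witt hQ _ _ hb ha (by simpa using hab.symm)
      apply Quotient.sound
      exact ⟨⟨g, hg⟩, h⟩
  have h2 : Fintype.card (O G Q) = (Finset.univ.filter (fun g : G => g ∈ O G Q)).card := by
    rw [← Fintype.card_subtype]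
  rw [← h2]
  refine le_trans (le_of_eq ?_) (hb.le.trans (Nat.mul_le_mul_right _ h1))
  have h3 : ∀ v : V, (Finset.univ.filter (fun g : G => g ∈ O G Q ∧ g • v = v)).card
      = ∑ g : O G Q, if (g : G) • v = v then 1 else 0 := by
    intro v
    rw [Finset.sum_boole, ← Finset.filter_filter, ← Fintype.card_subtype, Finset.filter_filter]
    rw [← Fintype.card_subtype]
    exact Fintype.card_congr ⟨fun x => ⟨⟨x.1, x.2.1⟩, x.2.2⟩, fun x => ⟨x.1.1, x.1.2, x.2⟩,
      fun _ => rfl, fun _ => rfl⟩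
  rw [Finset.sum_congr rfl (fun v _ => h3 v), Finset.sum_comm]
  refine Finset.sum_congr rfl fun g _ => ?_
  rw [Finset.sum_boole, ← Fintype.card_subtype]
  rfl

open Classical in
theorem dcount (S : Symp F V G B) (hQ : IsQ B Q) [Fintype G] :
    (Finset.univ.filter (fun g : G => g ∈ O G Q)).card ≤
      6 * (Finset.univ.filter (fun g : G => g ∈ O G Q ∧ ∀ x : V, g • x = x → x = 0)).card := by
  have hV := Fintype.ofFinite V
  have hF := Fintype.ofFinite F
  set q := Nat.card F with hq
  have hq2 : 2 ≤ q := Finite.one_lt_card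
  have hb := S.burnside hQ
  set E := Finset.univ.filter (fun g : G => g ∈ O G Q ∧ Even (Module.finrank F (S.fix g))) with hE
  set D := Finset.univ.filter (fun g : G => g ∈ O G Q ∧ ∀ x : V, g • x = x → x = 0) with hD
  set H := Finset.univ.filter (fun g : G => g ∈ O G Q) with hH
  have hEH : 2 * E.card = H.card := by
    have := S.half hQ 0
    simpa using this
  have hDE : D ⊆ E := by
    intro g hg
    simp only [hD, hE, Finset.mem_filter, Finset.mem_univ, true_and] at hg ⊢
    refine ⟨hg.1, ?_⟩
    have : S.fix g = ⊥ := by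
      rw [eq_bot_iff]
      intro x hx
      exact hg.2 x ((S.mem_fix g x).1 hx)
    rw [this]; simp
  have hsum : ∑ v : V, (Finset.univ.filter (fun g : G => (g ∈ O G Q ∧ g • v = v) ∧
        Even (Module.finrank F (S.fix g)))).card = ∑ g ∈ E, Nat.card (S.fix g) := by
    have h3 : ∀ v : V, (Finset.univ.filter (fun g : G => (g ∈ O G Q ∧ g • v = v) ∧
        Even (Module.finrank F (S.fix g)))).card = ∑ g ∈ E, if g • v = v then 1 else 0 := by
      intro v
      rw [Finset.sum_boole, hE, Finset.filter_filter]
      simp only [Nat.cast_id]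
      congr 1
      ext g
      simp only [Finset.mem_filter, Finset.mem_univ, true_and]
      tauto
    rw [Finset.sum_congr rfl (fun v _ => h3 v), Finset.sum_comm]
    refine Finset.sum_congr rfl fun g _ => ?_
    rw [Finset.sum_boole, ← Fintype.card_subtype, Nat.card_eq_fintype_card]
    simp only [Nat.cast_id]
    exact Fintype.card_congr (Equiv.subtypeEquivRight fun x => (S.mem_fix g x).symm)
  have hlow : D.card + q ^ 2 * (E \ D).card ≤ ∑ g ∈ E, Nat.card (S.fix g) := by
    rw [← Finset.sum_sdiff hDE, add_comm]
    apply add_le_add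
    · rw [mul_comm, ← smul_eq_mul]
      apply Finset.card_nsmul_le_sum
      intro g hg
      rw [Module.natCard_eq_pow_finrank (K := F)]
      apply Nat.pow_le_pow_right (by omega)
      simp only [hD, hE, Finset.mem_sdiff, Finset.mem_filter, Finset.mem_univ, true_and] at hg
      obtain ⟨⟨h1, h2⟩, h3⟩ := hg
      have : Module.finrank F (S.fix g) ≠ 0 := by
        intro h0
        apply h3
        refine ⟨h1, fun x hx => ?_⟩
        have h4 := Submodule.finrank_eq_zero.1 h0
        have h5 := (S.mem_fix g x).2 hx
        rw [h4] at h5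
        simpa using h5
      obtain ⟨k, hk⟩ := h2
      omega
    · rw [Finset.card_eq_sum_ones]
      apply Finset.sum_le_sum
      intro g _
      exact Nat.card_pos
  have htot : 2 * ∑ g ∈ E, Nat.card (S.fix g) ≤ (q + 1) * H.card := by
    rw [← hsum, Finset.mul_sum, Finset.sum_congr rfl (fun v _ => S.half hQ v)]
    exact hb
  have hsd := Finset.card_sdiff_add_card_eq_card hDE
  have h0 : 2 * (D.card + q ^ 2 * (E \ D).card) ≤ (q + 1) * (2 * E.card) := by
    rw [hEH]; exact le_trans (Nat.mul_le_mul_left 2 hlow) htot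
  rw [← hEH]
  rw [← hsd] at h0 ⊢
  convert arith _ _ q hq2 h0

open Classical in
theorem scount (S : Symp F V G B) (hQ : IsQ B Q) [Fintype G] :
    Fintype.card G ≤
      6 * (Finset.univ.filter (fun y : G => ∃ k : G, k * y * k⁻¹ ∈ O G Q)).card := by
  set D := Finset.univ.filter (fun g : G => g ∈ O G Q ∧ ∀ x : V, g • x = x → x = 0) with hD
  set H := Finset.univ.filter (fun g : G => g ∈ O G Q) with hH
  set T := Finset.univ.filter (fun y : G => ∃ k : G, k * y * k⁻¹ ∈ O G Q) with hT
  have hHD : H.card ≤ 6 * D.card := S.dcount hQ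
  have hHpos : 0 < H.card := Finset.card_pos.2 ⟨1, by simp [hH, one_mem]⟩
  have hm : ((Finset.univ : Finset G) ×ˢ D).card ≤ H.card * T.card := by
    apply Finset.card_le_mul_card_image_of_maps_to (f := fun p : G × G => p.1⁻¹ * p.2 * p.1)
    · rintro ⟨k, h⟩ hp
      simp only [hD, hT, Finset.mem_product, Finset.mem_filter, Finset.mem_univ, true_and] at hp ⊢
      refine ⟨k, ?_⟩
      have : k * (k⁻¹ * h * k) * k⁻¹ = h := by group
      rw [this]; exact hp.1
    · intro y _
      rcases Finset.eq_empty_or_nonempty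
        (Finset.filter (fun p : G × G => p.1⁻¹ * p.2 * p.1 = y) (Finset.univ ×ˢ D)) with h | h
      · rw [h]; simp
      obtain ⟨⟨k, h⟩, hp⟩ := h
      simp only [hD, Finset.mem_product, Finset.mem_filter, Finset.mem_univ, true_and] at hp
      have hfix0 : ∀ x : V, y • x = x → x = 0 := by
        intro x hx
        rw [← hp.2, mul_smul, mul_smul, inv_smul_eq_iff] at hx
        have := hp.1.2 _ hx
        simpa using congrArg (k⁻¹ • ·) this
      have hfixQ : ∀ k h : G, h ∈ O G Q → k⁻¹ * h * k = y → ∀ x, Q (k • y • x) = Q (k • x) := by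
        intro k h hh e x
        rw [← e, mul_smul, mul_smul, smul_inv_smul]
        exact hh _
      have hIs : ∀ k : G, IsQ B (fun x => Q (k • x)) := fun k =>
        ⟨fun a x => by rw [S.smulc, hQ.sm], fun x y => by rw [smul_add, hQ.ad, S.inv]⟩
      apply Finset.card_le_card_of_injOn (fun p => p.1 * k⁻¹)
      · rintro ⟨k', h'⟩ hp'
        simp only [hD, hH, Finset.mem_product, Finset.mem_filter, Finset.mem_univ, true_and,
          Finset.coe_filter, Set.mem_ofPred_eq] at hp' ⊢
        have hu := S.uniq (hIs k) (hIs k') y hfix0 (hfixQ k h hp.1.1 hp.2)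
          (hfixQ k' h' hp'.1.1 hp'.2)
        intro x
        have := congrFun hu (k⁻¹ • x)
        simp only [smul_inv_smul] at this
        rw [mul_smul, this]
      · rintro ⟨k1, h1⟩ hp1 ⟨k2, h2⟩ hp2 he
        simp only [hD, Finset.mem_product, Finset.mem_filter, Finset.mem_univ, true_and,
          Finset.coe_filter, Set.mem_ofPred_eq] at hp1 hp2 he
        have e := mul_right_cancel he
        subst e
        have e2 := hp1.2.trans hp2.2.symm
        have e3 := mul_left_cancel (mul_right_cancel e2)
        rw [e3]
  rw [Finset.card_product, Finset.card_univ] at hm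
  have : Fintype.card G * H.card ≤ 6 * T.card * H.card := by
    calc Fintype.card G * H.card ≤ Fintype.card G * (6 * D.card) := Nat.mul_le_mul_left _ hHD
      _ = 6 * (Fintype.card G * D.card) := by ring
      _ ≤ 6 * (H.card * T.card) := Nat.mul_le_mul_left _ hm
      _ = _ := by ring
  exact Nat.le_of_mul_le_mul_right this hHpos

theorem main (S : Symp F V G B) (hQ : IsQ B Q) (x : G) :
    (Nat.card {y : G // InvGen x y} : ℝ) ≤ (1 - 1 / 6) * Nat.card G := by
  classical
  have := Fintype.ofFinite G
  obtain ⟨Q', hQ', hx⟩ := S.dye hQ x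
  have h := S.scount hQ'
  have h1 := Finset.card_filter_add_card_filter_not
    (s := (Finset.univ : Finset G)) (fun y : G => ∃ k : G, k * y * k⁻¹ ∈ O G Q')
  have h2 : (Finset.univ.filter (fun y : G => InvGen x y)).card ≤
      (Finset.univ.filter (fun y : G => ¬ ∃ k : G, k * y * k⁻¹ ∈ O G Q')).card := by
    apply Finset.card_le_card
    intro y hy
    simp only [Finset.mem_filter, Finset.mem_univ, true_and] at hy ⊢
    rintro ⟨k, hk⟩
    apply S.proper hQ'
    rw [eq_top_iff, ← hy 1 k, Subgroup.closure_le]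
    rintro z (rfl | rfl)
    · have hx' : x ∈ O G Q' := hx
      simpa using hx'
    · exact hk
  rw [Nat.card_eq_fintype_card, Nat.card_eq_fintype_card, Fintype.card_subtype]
  rw [Finset.card_univ] at h1
  generalize (Finset.univ.filter (fun y : G => InvGen x y)).card = a at *
  generalize (Finset.univ.filter (fun y : G => ¬ ∃ k : G, k * y * k⁻¹ ∈ O G Q')).card = b at *
  have h3 : 6 * a ≤ 5 * Fintype.card G := by omega
  have h4 : (6 : ℝ) * a ≤ 5 * Fintype.card G := by exact_mod_cast h3
  linarith

end Symp

open Matrix in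
theorem symp_inst (m : ℕ) (hm : 2 ≤ m) (F : Type) [Field F] [Fintype F] [CharP F 2] :
    ∃ (B : (Fin m ⊕ Fin m → F) →ₗ[F] (Fin m ⊕ Fin m → F) →ₗ[F] F)
      (Q : (Fin m ⊕ Fin m → F) → F),
      Symp F (Fin m ⊕ Fin m → F) (Matrix.symplecticGroup (Fin m) F) B ∧ IsQ B Q := by
  have h2 : (2 : F) = 0 := CharTwo.two_eq_zero
  set B : (Fin m ⊕ Fin m → F) →ₗ[F] (Fin m ⊕ Fin m → F) →ₗ[F] F :=
    Matrix.toLinearMap₂' F (Matrix.J (Fin m) F) with hB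
  have hBv : ∀ x y, B x y = x ⬝ᵥ (Matrix.J (Fin m) F *ᵥ y) := fun x y => by
    rw [hB, Matrix.toLinearMap₂'_apply']
  have hBs : ∀ x y : Fin m ⊕ Fin m → F, B x y =
      ∑ i, (x (Sum.inl i) * y (Sum.inr i) + x (Sum.inr i) * y (Sum.inl i)) := by
    intro x y
    rw [hBv, Matrix.J, Matrix.fromBlocks_mulVec]
    simp [dotProduct, Finset.sum_add_distrib, Matrix.neg_mulVec, CharTwo.neg_eq]
  have hnd : ∀ x, (∀ y, B x y = 0) → x = 0 := by
    intro x hx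
    funext i
    rcases i with i | i
    · have := hx (Pi.single (Sum.inr i) 1)
      rw [hBs] at this
      simpa [Pi.single_apply] using this
    · have := hx (Pi.single (Sum.inl i) 1)
      rw [hBs] at this
      simpa [Pi.single_apply] using this
  refine ⟨B, fun x => ∑ i, x (Sum.inl i) * x (Sum.inr i), ⟨?_, hnd, ?_, ?_, ?_, ?_⟩, ⟨?_, ?_⟩⟩
  · intro x
    rw [hBs]
    apply Finset.sum_eq_zero
    intro i _
    linear_combination x (Sum.inl i) * x (Sum.inr i) * h2
  · intro g x y
    have hg := SymplecticGroup.mem_iff'.1 g.2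
    have e : ∀ z : Fin m ⊕ Fin m → F, g • z = g.1 *ᵥ z := fun z => rfl
    rw [hBv, hBv, e, e]
    conv_rhs => rw [← hg]
    rw [Matrix.dotProduct_mulVec, Matrix.dotProduct_mulVec, Matrix.dotProduct_mulVec]
    simp only [← Matrix.vecMul_vecMul, Matrix.vecMul_transpose]
  · intro T hT
    refine ⟨⟨LinearMap.toMatrix' T, ?_⟩, fun x => ?_⟩
    · rw [SymplecticGroup.mem_iff']
      apply (Matrix.toLinearMap₂' F (S₁ := F) (S₂ := F) (N₂ := F)).injective
      apply LinearMap.ext₂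
      intro x y
      rw [← hB, ← hT, hBv, Matrix.toLinearMap₂'_apply', ← LinearMap.toMatrix'_mulVec T,
        ← LinearMap.toMatrix'_mulVec T]
      rw [Matrix.dotProduct_mulVec, Matrix.dotProduct_mulVec, Matrix.dotProduct_mulVec]
      simp only [← Matrix.vecMul_vecMul, Matrix.vecMul_transpose]
    · exact LinearMap.toMatrix'_mulVec T x
  · intro v
    by_contra! hc
    have hle : LinearMap.ker (B v) ≤ Submodule.span F {v} := by
      intro w hw
      obtain ⟨c, hc⟩ := hc w hw
      rw [Submodule.mem_span_singleton]
      exact ⟨c, hc.symm⟩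
    have h1 := Submodule.finrank_mono hle
    have h3 := finrank_span_le_card (R := F) ({v} : Set (Fin m ⊕ Fin m → F))
    have h4 := LinearMap.finrank_range_add_finrank_ker (B v)
    have h5 := Submodule.finrank_le (LinearMap.range (B v))
    simp at h3 h4 h5
    omega
  · intro g c x
    exact Matrix.mulVec_smul _ _ _
  · intro a x
    rw [Finset.mul_sum]
    apply Finset.sum_congr rfl
    intro i _
    simp only [Pi.smul_apply, smul_eq_mul]
    ring
  · intro x y
    rw [hBs, ← Finset.sum_add_distrib, ← Finset.sum_add_distrib]
    apply Finset.sum_congr rfl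
    intro i _
    simp only [Pi.add_apply]
    ring

theorem stmt_15 :
    ∃ δ : ℝ, 0 < δ ∧
      ∀ m : ℕ, 2 ≤ m →
        ∀ (F : Type) [Field F] [Fintype F], Even (Fintype.card F) →
          ∀ x : Matrix.symplecticGroup (Fin m) F,
            (Nat.card {y : Matrix.symplecticGroup (Fin m) F // InvGen x y} : ℝ) ≤
              (1 - δ) * Nat.card (Matrix.symplecticGroup (Fin m) F) := by
  refine ⟨1 / 6, by norm_num, ?_⟩
  intro m hm F _ _ hF x
  have h2 : ringChar F = 2 := FiniteField.even_card_iff_char_two.2 (Nat.even_iff.1 hF)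
  have : CharP F 2 := h2 ▸ ringChar.charP F
  obtain ⟨B, Q, S, hQ⟩ := symp_inst m hm F
  exact S.main hQ x
end
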